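/- arXiv:1004.2978 — 2 statements merged into one kernel-verified Lean document; each statement's English description precedes it below -/
import Mathlib

section
/- Assume N ≥ 3. Then (i) an element ω ∈ Ω satisfies dω = 0 if and only if ω ∼ b₀₀ + ψ₁b₁₀ + χ₁b₀₁ for some polynomials b₀₀, b₁₀, b₀₁ ∈ ℂ[ψ₂,…,ψ_N, χ₂,…,χ_N]; and (ii) such a combination is ∼ 0 if and only if b₀₀ = ½ Σ_{i=2}^{N} Σ_{j=2}^{N} (ψᵢχⱼ − χᵢψⱼ)² d₁₁ and ψ₁b₁₀ + χ₁b₀₁ = Σ_{i=2}^{N} [ψᵢ(ψ₁χᵢ − χ₁ψᵢ)d₁₀ − χᵢ(ψ₁χᵢ − χ₁ψᵢ)d₀₁] for some polynomials d₁₁, d₁₀, d₀₁ ∈ ℂ[ψ₂,…,ψ_N, χ₂,…,χ_N]. -/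
/-!
D = 3 supersymmetry algebra cohomology.
`R3 N = ℂ[ψ₁,…,ψ_N, χ₁,…,χ_N]`, `Om3 N` is the free module with basis
`{1, c̃₁, c̃₂, c̃₃, c̃₁c̃₂, c̃₁c̃₃, c̃₂c̃₃, c̃₁c̃₂c̃₃}` (components 0,…,7), and
`d3` is the odd superderivation with `dc̃₁ = P`, `dc̃₂ = Q`, `dc̃₃ = S`, `d|_R = 0`.
-/

open MvPolynomial

noncomputable section

/-- The polynomial ring `ℂ[ψ₁,…,ψ_N, χ₁,…,χ_N]`; `Sum.inl i ↦ ψᵢ`, `Sum.inr i ↦ χᵢ`. -/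
abbrev R3 (N : ℕ) : Type := MvPolynomial (Fin N ⊕ Fin N) ℂ

/-- `Ω`: free `R3`-module with basis
`{1, c̃₁, c̃₂, c̃₃, c̃₁c̃₂, c̃₁c̃₃, c̃₂c̃₃, c̃₁c̃₂c̃₃}` (components 0,…,7). -/
abbrev Om3 (N : ℕ) : Type := Fin 8 → R3 N

/-- The ghost `ψᵢ`. -/
def ψ {N : ℕ} (i : Fin N) : R3 N := X (Sum.inl i)

/-- The ghost `χᵢ`. -/
def χ {N : ℕ} (i : Fin N) : R3 N := X (Sum.inr i)

/-- `P = Σ ψᵢ²`. -/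
def PP (N : ℕ) : R3 N := ∑ i, ψ i ^ 2

/-- `Q = Σ χᵢ²`. -/
def QQ (N : ℕ) : R3 N := ∑ i, χ i ^ 2

/-- `S = Σ ψᵢχᵢ`. -/
def SS (N : ℕ) : R3 N := ∑ i, ψ i * χ i

/-- The differential: the unique R-linear odd superderivation with
`dc̃₁ = P`, `dc̃₂ = Q`, `dc̃₃ = S` and `d|_R = 0`, written out in components:
`d(ω₀ + c̃₁ω₁ + c̃₂ω₂ + c̃₃ω₃ + c̃₁c̃₂ω₄ + c̃₁c̃₃ω₅ + c̃₂c̃₃ω₆ + c̃₁c̃₂c̃₃ω₇)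
 = Pω₁ + Qω₂ + Sω₃ + (Pc̃₂ − Qc̃₁)ω₄ + (Pc̃₃ − Sc̃₁)ω₅ + (Qc̃₃ − Sc̃₂)ω₆
   + (Pc̃₂c̃₃ − Qc̃₁c̃₃ + Sc̃₁c̃₂)ω₇`. -/
def d3 {N : ℕ} (ω : Om3 N) : Om3 N :=
  ![PP N * ω 1 + QQ N * ω 2 + SS N * ω 3,
    -(QQ N * ω 4) - SS N * ω 5,
    PP N * ω 4 - SS N * ω 6,
    PP N * ω 5 + QQ N * ω 6,
    SS N * ω 7,
    -(QQ N * ω 7),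
    PP N * ω 7,
    0]

/-- Embedding of `R` into `Ω` (coefficient of the basis element `1`). -/
def ofR3 {N : ℕ} (r : R3 N) : Om3 N := ![r, 0, 0, 0, 0, 0, 0, 0]

/-- `ω ∼ ω'` iff `ω − ω' = dρ` for some `ρ`. -/
def Equiv3 {N : ℕ} (ω ω' : Om3 N) : Prop := ∃ ρ, ω - ω' = d3 ρ

/-- The subring `ℂ[ψ₂,…,ψ_N, χ₂,…,χ_N]` of `R3 N`. -/
def coefRing3 (N : ℕ) (hN : 0 < N) : Subalgebra ℂ (R3 N) :=
  MvPolynomial.supported ℂ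
    {v : Fin N ⊕ Fin N | v ≠ Sum.inl ⟨0, hN⟩ ∧ v ≠ Sum.inr ⟨0, hN⟩}

/-- reduced sums -/
def pr {N : ℕ} (z : Fin N) : R3 N := ∑ i ∈ Finset.univ.erase z, ψ i ^ 2
def qr {N : ℕ} (z : Fin N) : R3 N := ∑ i ∈ Finset.univ.erase z, χ i ^ 2
def sr {N : ℕ} (z : Fin N) : R3 N := ∑ i ∈ Finset.univ.erase z, ψ i * χ i

lemma PP_eq {N : ℕ} (z : Fin N) : PP N = ψ z ^ 2 + pr z :=
  (Finset.add_sum_erase _ _ (Finset.mem_univ z)).symm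
lemma QQ_eq {N : ℕ} (z : Fin N) : QQ N = χ z ^ 2 + qr z :=
  (Finset.add_sum_erase _ _ (Finset.mem_univ z)).symm
lemma SS_eq {N : ℕ} (z : Fin N) : SS N = ψ z * χ z + sr z :=
  (Finset.add_sum_erase _ (fun i => ψ i * χ i) (Finset.mem_univ z)).symm

/-- the coefficient ring for a general distinguished index -/
def cR {N : ℕ} (z : Fin N) : Subalgebra ℂ (R3 N) :=
  MvPolynomial.supported ℂ {v : Fin N ⊕ Fin N | v ≠ Sum.inl z ∧ v ≠ Sum.inr z}

lemma psi_mem {N : ℕ} {z i : Fin N} (h : i ≠ z) : (ψ i : R3 N) ∈ cR z := by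
  unfold cR ψ
  rw [X_mem_supported]
  simpa using h

lemma chi_mem {N : ℕ} {z i : Fin N} (h : i ≠ z) : (χ i : R3 N) ∈ cR z := by
  unfold cR χ
  rw [X_mem_supported]
  simpa using h

lemma pr_mem {N : ℕ} (z : Fin N) : pr z ∈ cR z :=
  sum_mem fun _ hi => pow_mem (psi_mem (Finset.ne_of_mem_erase hi)) _
lemma qr_mem {N : ℕ} (z : Fin N) : qr z ∈ cR z :=
  sum_mem fun _ hi => pow_mem (chi_mem (Finset.ne_of_mem_erase hi)) _
lemma sr_mem {N : ℕ} (z : Fin N) : sr z ∈ cR z :=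
  sum_mem fun _ hi => mul_mem (psi_mem (Finset.ne_of_mem_erase hi))
    (chi_mem (Finset.ne_of_mem_erase hi))

/-- normal form modulo `(P, Q)` -/
lemma nf {N : ℕ} (z : Fin N) (f : R3 N) :
    ∃ c0 ∈ cR z, ∃ c1 ∈ cR z, ∃ c2 ∈ cR z, ∃ c3 ∈ cR z, ∃ u v : R3 N,
      f = c0 + ψ z * c1 + χ z * c2 + ψ z * χ z * c3 + PP N * u + QQ N * v := by
  induction f using MvPolynomial.induction_on with
  | C a =>
    exact ⟨C a, (cR z).algebraMap_mem a, 0, zero_mem _, 0, zero_mem _, 0, zero_mem _, 0, 0, by simp⟩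
  | add f g hf hg =>
    obtain ⟨c0, h0, c1, h1, c2, h2, c3, h3, u, v, rfl⟩ := hf
    obtain ⟨e0, k0, e1, k1, e2, k2, e3, k3, u', v', rfl⟩ := hg
    exact ⟨c0 + e0, add_mem h0 k0, c1 + e1, add_mem h1 k1, c2 + e2, add_mem h2 k2, c3 + e3,
      add_mem h3 k3, u + u', v + v', by ring⟩
  | mul_X f w hf =>
    obtain ⟨c0, h0, c1, h1, c2, h2, c3, h3, u, v, rfl⟩ := hf
    by_cases hw : w = Sum.inl z
    · subst hw
      refine ⟨-(pr z * c1), neg_mem (mul_mem (pr_mem z) h1), c0, h0, -(pr z * c3),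
        neg_mem (mul_mem (pr_mem z) h3), c2, h2, c1 + χ z * c3 + u * ψ z, v * ψ z, ?_⟩
      change _ * ψ z = _
      rw [PP_eq z]
      ring
    by_cases hw' : w = Sum.inr z
    · subst hw'
      refine ⟨-(qr z * c2), neg_mem (mul_mem (qr_mem z) h2), -(qr z * c3),
        neg_mem (mul_mem (qr_mem z) h3), c0, h0, c1, h1, u * χ z, c2 + ψ z * c3 + v * χ z, ?_⟩
      change _ * χ z = _
      rw [QQ_eq z]
      ring
    have hX : (X w : R3 N) ∈ cR z := by
      unfold cR
      rw [X_mem_supported]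
      exact ⟨hw, hw'⟩
    exact ⟨c0 * X w, mul_mem h0 hX, c1 * X w, mul_mem h1 hX, c2 * X w, mul_mem h2 hX, c3 * X w,
      mul_mem h3 hX, u * X w, v * X w, by ring⟩

/-- the two-step quadratic extension -/
abbrev B1 {N : ℕ} (z : Fin N) : Type := QuadraticAlgebra (R3 N) (-(pr z)) 0
abbrev B2 {N : ℕ} (z : Fin N) : Type :=
  QuadraticAlgebra (B1 z) (algebraMap (R3 N) (B1 z) (-(qr z))) 0

def phi {N : ℕ} (z : Fin N) : R3 N →ₐ[ℂ] B2 z :=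
  MvPolynomial.aeval (fun v =>
    if v = Sum.inl z then (⟨⟨0, 1⟩, 0⟩ : B2 z) else
    if v = Sum.inr z then (⟨0, 1⟩ : B2 z) else ⟨⟨X v, 0⟩, 0⟩)

lemma phi_psi {N : ℕ} (z : Fin N) : phi z (ψ z) = ⟨⟨0, 1⟩, 0⟩ := by
  simp [phi, ψ]

lemma phi_chi {N : ℕ} (z : Fin N) : phi z (χ z) = ⟨0, 1⟩ := by
  simp [phi, χ]

lemma phi_coef {N : ℕ} (z : Fin N) {f : R3 N} (hf : f ∈ cR z) :
    phi z f = ⟨⟨f, 0⟩, 0⟩ := by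
  unfold cR MvPolynomial.supported at hf
  induction hf using Algebra.adjoin_induction with
  | mem x hx =>
    obtain ⟨v, hv, rfl⟩ := hx
    simp only [Set.mem_setOf_eq] at hv
    simp [phi, hv.1, hv.2]
  | algebraMap r => rw [AlgHom.commutes]; rfl
  | add x y _ _ hx hy => rw [map_add, hx, hy]; ext <;> simp
  | mul x y _ _ hx hy => rw [map_mul, hx, hy]; ext <;> simp

lemma phi_P {N : ℕ} (z : Fin N) : phi z (PP N) = 0 := by
  rw [PP_eq z, map_add, map_pow, phi_psi, phi_coef z (pr_mem z), pow_two]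
  ext <;> simp

lemma phi_Q {N : ℕ} (z : Fin N) : phi z (QQ N) = 0 := by
  rw [QQ_eq z, map_add, map_pow, phi_chi, phi_coef z (qr_mem z), pow_two]
  ext <;> simp [QuadraticAlgebra.re_one, QuadraticAlgebra.im_one]

lemma nf_unique {N : ℕ} (z : Fin N) {c0 c1 c2 c3 u v : R3 N} (h0 : c0 ∈ cR z) (h1 : c1 ∈ cR z)
    (h2 : c2 ∈ cR z) (h3 : c3 ∈ cR z)
    (h : c0 + ψ z * c1 + χ z * c2 + ψ z * χ z * c3 = PP N * u + QQ N * v) :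
    c0 = 0 ∧ c1 = 0 ∧ c2 = 0 ∧ c3 = 0 := by
  have := congrArg (phi z) h
  simp only [map_add, map_mul, phi_psi, phi_chi, phi_P, phi_Q, phi_coef z h0, phi_coef z h1,
    phi_coef z h2, phi_coef z h3] at this
  have a0 := congrArg (fun t : B2 z => t.re.re) this
  have a1 := congrArg (fun t : B2 z => t.re.im) this
  have a2 := congrArg (fun t : B2 z => t.im.re) this
  have a3 := congrArg (fun t : B2 z => t.im.im) this
  simp [QuadraticAlgebra.re_one, QuadraticAlgebra.im_one] at a0 a1 a2 a3
  exact ⟨a0, a1, a2, a3⟩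

lemma disc_ne {N : ℕ} (z i j : Fin N) (hi : i ≠ z) (hj : j ≠ z) (hij : i ≠ j) :
    pr z * qr z - sr z ^ 2 ≠ 0 := by
  intro h
  have := congrArg (MvPolynomial.eval
    (Sum.elim (fun k => if k = i then (1 : ℂ) else 0) (fun k => if k = j then (1 : ℂ) else 0))) h
  simp [pr, qr, sr, ψ, χ, ite_pow, hi.symm, hj.symm, hij.symm] at this

lemma S_mul {N : ℕ} (z : Fin N) (c0 c1 c2 c3 u v : R3 N) :
    SS N * (c0 + ψ z * c1 + χ z * c2 + ψ z * χ z * c3 + PP N * u + QQ N * v) =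
      (sr z * c0 + pr z * qr z * c3) + ψ z * (sr z * c1 - qr z * c2)
      + χ z * (sr z * c2 - pr z * c1) + ψ z * χ z * (c0 + sr z * c3)
      + PP N * (χ z * c1 + χ z ^ 2 * c3 + SS N * u)
      + QQ N * (ψ z * c2 - pr z * c3 + SS N * v) := by
  rw [PP_eq z, QQ_eq z, SS_eq z]
  ring

lemma S_regular {N : ℕ} (z : Fin N) (hne : pr z * qr z - sr z ^ 2 ≠ 0) {a b c : R3 N}
    (h : SS N * c = PP N * a + QQ N * b) : ∃ u v, c = PP N * u + QQ N * v := by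
  obtain ⟨c0, h0, c1, h1, c2, h2, c3, h3, u, v, rfl⟩ := nf z c
  rw [S_mul] at h
  have hp := pr_mem z
  have hq := qr_mem z
  have hs := sr_mem z
  obtain ⟨e0, e1, e2, e3⟩ := nf_unique z
    (u := a - (χ z * c1 + χ z ^ 2 * c3 + SS N * u)) (v := b - (ψ z * c2 - pr z * c3 + SS N * v))
    (add_mem (mul_mem hs h0) (mul_mem (mul_mem hp hq) h3))
    (sub_mem (mul_mem hs h1) (mul_mem hq h2))
    (sub_mem (mul_mem hs h2) (mul_mem hp h1))
    (add_mem h0 (mul_mem hs h3)) (by linear_combination h)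
  have f3 : c3 = 0 := (mul_eq_zero.1 (show (pr z * qr z - sr z ^ 2) * c3 = 0 by
    linear_combination e0 - sr z * e3)).resolve_left hne
  have f1 : c1 = 0 := (mul_eq_zero.1 (show (pr z * qr z - sr z ^ 2) * c1 = 0 by
    linear_combination -sr z * e1 - qr z * e2)).resolve_left hne
  have f2 : c2 = 0 := (mul_eq_zero.1 (show (pr z * qr z - sr z ^ 2) * c2 = 0 by
    linear_combination -sr z * e2 - pr z * e1)).resolve_left hne
  subst f1 f2 f3
  have f0 : c0 = 0 := by simpa using e3
  subst f0
  exact ⟨u, v, by ring⟩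

lemma vars_of_dvd {N : ℕ} {d f : R3 N} (hf : f ≠ 0) (h : d ∣ f) : d.vars ⊆ f.vars := by
  obtain ⟨e, rfl⟩ := h
  intro i hi
  rw [mem_vars_iff_degreeOf_ne_zero] at hi ⊢
  rw [degreeOf_mul_eq (left_ne_zero_of_mul hf) (right_ne_zero_of_mul hf)]
  omega

lemma PP_ne {N : ℕ} (z : Fin N) : PP N ≠ 0 := by
  intro h
  have := congrArg (MvPolynomial.eval
    (Sum.elim (fun k => if k = z then (1 : ℂ) else 0) (fun k => 0))) h
  simp [PP, ψ, ite_pow] at this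

lemma QQ_ne {N : ℕ} (z : Fin N) : QQ N ≠ 0 := by
  intro h
  have := congrArg (MvPolynomial.eval
    (Sum.elim (fun k => 0) (fun k => if k = z then (1 : ℂ) else 0))) h
  simp [QQ, χ, ite_pow] at this

lemma relPrime_PQ {N : ℕ} (z : Fin N) : IsRelPrime (PP N) (QQ N) := by
  intro d h1 h2
  have k1 := vars_of_dvd (PP_ne z) h1
  have k2 := vars_of_dvd (QQ_ne z) h2
  have m1 : PP N ∈ supported ℂ (Set.range (Sum.inl : Fin N → Fin N ⊕ Fin N)) :=
    sum_mem fun i _ => pow_mem (X_mem_supported.2 (Set.mem_range_self i)) _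
  have m2 : QQ N ∈ supported ℂ (Set.range (Sum.inr : Fin N → Fin N ⊕ Fin N)) :=
    sum_mem fun i _ => pow_mem (X_mem_supported.2 (Set.mem_range_self i)) _
  rw [mem_supported] at m1 m2
  have hd : d.vars = ∅ := by
    rw [Finset.eq_empty_iff_forall_notMem]
    intro v hv
    obtain ⟨i, rfl⟩ := m1 (k1 hv)
    obtain ⟨j, hj⟩ := m2 (k2 hv)
    cases hj
  rw [vars_eq_empty_iff_eq_C] at hd
  have : coeff 0 d ≠ 0 := by
    intro h
    rw [h, C_0] at hd
    rw [hd] at h1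
    exact PP_ne z (zero_dvd_iff.1 h1)
  rw [hd]
  exact (IsUnit.mk0 _ this).map C

lemma lagrange {N : ℕ} (z : Fin N) :
    C (1/2 : ℂ) * (∑ i ∈ Finset.univ.erase z, ∑ j ∈ Finset.univ.erase z,
      (ψ i * χ j - χ i * ψ j) ^ 2) = pr z * qr z - sr z ^ 2 := by
  have : (∑ i ∈ Finset.univ.erase z, ∑ j ∈ Finset.univ.erase z,
      ((ψ i * χ j - χ i * ψ j) ^ 2 : R3 N)) = C 2 * (pr z * qr z - sr z ^ 2) := by
    have e : ∀ i j : Fin N, ((ψ i * χ j - χ i * ψ j) ^ 2 : R3 N) =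
      ψ i ^ 2 * χ j ^ 2 + χ i ^ 2 * ψ j ^ 2 - C 2 * ((ψ i * χ i) * (ψ j * χ j)) := by
      intro i j
      rw [show (C 2 : R3 N) = 2 from map_ofNat C 2]
      ring
    simp only [e, Finset.sum_add_distrib, Finset.sum_sub_distrib, ← Finset.mul_sum,
      ← Finset.sum_mul]
    rw [show (C 2 : R3 N) = 2 from map_ofNat C 2]
    unfold pr qr sr
    ring
  rw [this, ← mul_assoc, ← C_mul]
  norm_num

lemma second_sum {N : ℕ} (z : Fin N) (d10 d01 : R3 N) :
    ∑ i ∈ Finset.univ.erase z,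
      (ψ i * (ψ z * χ i - χ z * ψ i) * d10 - χ i * (ψ z * χ i - χ z * ψ i) * d01)
    = (ψ z * sr z - χ z * pr z) * d10 - (ψ z * qr z - χ z * sr z) * d01 := by
  have e : ∀ i : Fin N, (ψ i * (ψ z * χ i - χ z * ψ i) * d10
      - χ i * (ψ z * χ i - χ z * ψ i) * d01 : R3 N)
    = (ψ z * d10 + χ z * d01) * (ψ i * χ i) - (χ z * d10) * ψ i ^ 2 - (ψ z * d01) * χ i ^ 2 := by
    intro i; ring
  simp only [e, Finset.sum_sub_distrib, ← Finset.mul_sum]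
  unfold pr qr sr
  ring

lemma d3_closed {N : ℕ} (z : Fin N) (hne : pr z * qr z - sr z ^ 2 ≠ 0) (ω : Om3 N)
    (h : d3 ω = 0) : ∃ b00 ∈ cR z, ∃ b10 ∈ cR z, ∃ b01 ∈ cR z,
      Equiv3 ω (ofR3 (b00 + ψ z * b10 + χ z * b01)) := by
  have g0 := congrFun h 0
  have g2 := congrFun h 2
  have g3 := congrFun h 3
  have g6 := congrFun h 6
  simp [d3] at g0 g2 g3 g6
  have hP := PP_ne z
  have w7 : ω 7 = 0 := g6.resolve_left hP
  obtain ⟨e, he⟩ : PP N ∣ ω 6 := (relPrime_PQ z).dvd_of_dvd_mul_left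
    ⟨-ω 5, by linear_combination g3⟩
  have w5 : ω 5 = -(QQ N * e) := mul_left_cancel₀ hP (by
    linear_combination g3 - QQ N * he)
  have w4 : ω 4 = SS N * e := mul_left_cancel₀ hP (by
    linear_combination g2 + SS N * he)
  obtain ⟨a, b, hab⟩ := S_regular z hne (a := -ω 1) (b := -ω 2) (c := ω 3)
    (by linear_combination g0)
  obtain ⟨g, hg⟩ : PP N ∣ ω 2 + SS N * b := (relPrime_PQ z).dvd_of_dvd_mul_left
    ⟨-(ω 1 + SS N * a), by linear_combination g0 - SS N * hab⟩
  have w1 : ω 1 = -(QQ N * g) - SS N * a := mul_left_cancel₀ hP (by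
    linear_combination g0 - SS N * hab - QQ N * hg)
  obtain ⟨c0, h0, c1, h1, c2, h2, c3, h3, u, v, hf⟩ := nf z (ω 0)
  refine ⟨c0 - sr z * c3, sub_mem h0 (mul_mem (sr_mem z) h3), c1, h1, c2, h2,
    ![0, u, v, c3, g, a, b, e], ?_⟩
  have hS := SS_eq z
  ext1 k
  fin_cases k <;> simp [d3, ofR3]
  · linear_combination hf - c3 * hS
  · exact w1
  · linear_combination hg
  · exact hab
  · exact w4
  · exact w5
  · exact he
  · exact w7

lemma d3_of_equiv {N : ℕ} (ω : Om3 N) (r : R3 N) (h : Equiv3 ω (ofR3 r)) : d3 ω = 0 := by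
  obtain ⟨ρ, h⟩ := h
  have hω : ω = ofR3 r + d3 ρ := by rw [← h]; abel
  rw [hω]
  ext1 k
  fin_cases k <;> simp [d3, ofR3] <;> ring

lemma exact_iff {N : ℕ} (z : Fin N) {b00 b10 b01 : R3 N} (h00 : b00 ∈ cR z) (h10 : b10 ∈ cR z)
    (h01 : b01 ∈ cR z) :
    Equiv3 (ofR3 (b00 + ψ z * b10 + χ z * b01)) 0 ↔
      ∃ d11 ∈ cR z, ∃ d10 ∈ cR z, ∃ d01 ∈ cR z,
        b00 = (pr z * qr z - sr z ^ 2) * d11 ∧ ψ z * b10 + χ z * b01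
          = (ψ z * sr z - χ z * pr z) * d10 - (ψ z * qr z - χ z * sr z) * d01 := by
  have hp := pr_mem z
  have hq := qr_mem z
  have hs := sr_mem z
  constructor
  · rintro ⟨ρ, h⟩
    have h := congrFun h 0
    simp [ofR3, d3] at h
    obtain ⟨c0, h0, c1, h1, c2, h2, c3, h3, u, v, hc⟩ := nf z (ρ 3)
    rw [hc, S_mul] at h
    obtain ⟨e0, e1, e2, e3⟩ := nf_unique z
      (u := ρ 1 + (χ z * c1 + χ z ^ 2 * c3 + SS N * u))
      (v := ρ 2 + (ψ z * c2 - pr z * c3 + SS N * v))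
      (sub_mem h00 (add_mem (mul_mem hs h0) (mul_mem (mul_mem hp hq) h3)))
      (sub_mem h10 (sub_mem (mul_mem hs h1) (mul_mem hq h2)))
      (sub_mem h01 (sub_mem (mul_mem hs h2) (mul_mem hp h1)))
      (neg_mem (add_mem h0 (mul_mem hs h3))) (by linear_combination h)
    refine ⟨c3, h3, c1, h1, c2, h2, ?_, ?_⟩
    · linear_combination e0 - sr z * e3
    · linear_combination ψ z * e1 + χ z * e2
  · rintro ⟨d11, -, d10, -, d01, -, rfl, h2⟩
    rw [add_assoc, h2]
    have hP := PP_eq z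
    have hQ := QQ_eq z
    have hS := SS_eq z
    refine ⟨![0, -(χ z * d10) - χ z ^ 2 * d11, -(ψ z * d01) + pr z * d11,
      ψ z * d10 + χ z * d01 + (ψ z * χ z - sr z) * d11, 0, 0, 0, 0], ?_⟩
    ext1 k
    fin_cases k <;> simp [d3, ofR3]
    rw [hP, hQ, hS]
    ring

/-- for `N ≥ 3`, (i) `dω = 0` iff `ω ∼ b₀₀ + ψ₁b₁₀ + χ₁b₀₁` with
coefficients in `ℂ[ψ₂,…,ψ_N, χ₂,…,χ_N]`; (ii) such a combination is `∼ 0` iff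
`b₀₀ = ½ Σ_{i,j≥2} (ψᵢχⱼ − χᵢψⱼ)² d₁₁` and
`ψ₁b₁₀ + χ₁b₀₁ = Σ_{i≥2} [ψᵢ(ψ₁χᵢ − χ₁ψᵢ)d₁₀ − χᵢ(ψ₁χᵢ − χ₁ψᵢ)d₀₁]` for some
`d₁₁, d₁₀, d₀₁ ∈ ℂ[ψ₂,…,ψ_N, χ₂,…,χ_N]`. -/
theorem stmt8 (N : ℕ) (hN : 3 ≤ N) :
    (∀ ω : Om3 N, d3 ω = 0 ↔
      ∃ b00 ∈ coefRing3 N (by omega), ∃ b10 ∈ coefRing3 N (by omega),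
      ∃ b01 ∈ coefRing3 N (by omega),
        Equiv3 ω (ofR3 (b00 + ψ ⟨0, by omega⟩ * b10 + χ ⟨0, by omega⟩ * b01)))
    ∧
    (∀ b00 b10 b01 : R3 N,
      b00 ∈ coefRing3 N (by omega) → b10 ∈ coefRing3 N (by omega) →
      b01 ∈ coefRing3 N (by omega) →
      (Equiv3 (ofR3 (b00 + ψ ⟨0, by omega⟩ * b10 + χ ⟨0, by omega⟩ * b01)) 0 ↔
        ∃ d11 ∈ coefRing3 N (by omega), ∃ d10 ∈ coefRing3 N (by omega),
        ∃ d01 ∈ coefRing3 N (by omega),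
          b00 = C (1/2 : ℂ)
              * (∑ i ∈ Finset.univ.erase (⟨0, by omega⟩ : Fin N),
                 ∑ j ∈ Finset.univ.erase (⟨0, by omega⟩ : Fin N),
                   (ψ i * χ j - χ i * ψ j) ^ 2) * d11
          ∧ ψ (⟨0, by omega⟩ : Fin N) * b10 + χ (⟨0, by omega⟩ : Fin N) * b01
            = ∑ i ∈ Finset.univ.erase (⟨0, by omega⟩ : Fin N),
                (ψ i * (ψ ⟨0, by omega⟩ * χ i - χ ⟨0, by omega⟩ * ψ i) * d10
                 - χ i * (ψ ⟨0, by omega⟩ * χ i - χ ⟨0, by omega⟩ * ψ i) * d01))) := by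
  have h0 : 0 < N := by omega
  have hne := disc_ne (⟨0, h0⟩ : Fin N) ⟨1, by omega⟩ ⟨2, by omega⟩ (by simp) (by simp) (by simp)
  refine ⟨fun ω => ⟨d3_closed ⟨0, h0⟩ hne ω, ?_⟩, ?_⟩
  · rintro ⟨_, -, _, -, _, -, h⟩
    exact d3_of_equiv _ _ h
  · intro b00 b10 b01 h00 h10 h01
    simp only [lagrange, second_sum]
    exact exact_iff ⟨0, h0⟩ h00 h10 h01
end
end

section
/- Assume N = 2, and let S be an arbitrary invertible 2×2 complex matrix, with ξ₁, ξ₂ defined via S as in the context. Then (i) an element ω ∈ Ω satisfies dω = 0 if and only if ω ∼ a + Σ_α ξ₁^α a_α + Θ₁₂ b₁ + (Θ₁₁ − Θ₂₂) b₂ for some polynomials a, a₁, a₂, b₁, b₂ ∈ ℂ[ψ₂, χ₂]; and (ii) such a combination is ∼ 0 if and only if a = b₁ = b₂ = 0 and Σ_α ξ₁^α a_α = (ξ₁·ξ₂)·(ξ₂¹d₁ + ξ₂²d₂) for some polynomials d₁, d₂ ∈ ℂ[ψ₂, χ₂]. -/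
/-!
D = 3 supersymmetry algebra cohomology.
`R3 N = ℂ[ψ₁,…,ψ_N, χ₁,…,χ_N]`, `Om3 N` is the free module with basis
`{1, c̃₁, c̃₂, c̃₃, c̃₁c̃₂, c̃₁c̃₃, c̃₂c̃₃, c̃₁c̃₂c̃₃}` (components 0,…,7), and
`d3` is the odd superderivation with `dc̃₁ = P`, `dc̃₂ = Q`, `dc̃₃ = S`, `d|_R = 0`.
-/

open MvPolynomial

noncomputable section

/-- The invariant `ξᵢ·ξⱼ = ψᵢχⱼ − χᵢψⱼ`. -/
def xidot {N : ℕ} (i j : Fin N) : R3 N := ψ i * χ j - χ i * ψ j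

/-- `Θᵢⱼ = i(c̃₃(ψᵢχⱼ + ψⱼχᵢ) − c̃₁χᵢχⱼ − c̃₂ψᵢψⱼ)` as an element of `Ω`. -/
def Theta {N : ℕ} (i j : Fin N) : Om3 N :=
  ![0,
    -(C Complex.I * (χ i * χ j)),
    -(C Complex.I * (ψ i * ψ j)),
    C Complex.I * (ψ i * χ j + ψ j * χ i),
    0, 0, 0, 0]

/-- The supersymmetry ghost `ξᵢ = (ψᵢ, iχᵢ)·S⁻¹` (row spinor, entries in `R`). -/
def xi3 {N : ℕ} (S : Matrix (Fin 2) (Fin 2) ℂ) (i : Fin N) (α : Fin 2) : R3 N :=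
  C (S⁻¹ 0 α) * ψ i + C (Complex.I * S⁻¹ 1 α) * χ i

/-- `ϑᵢ = (i(c̃₃ψᵢ − c̃₁χᵢ), c̃₃χᵢ − c̃₂ψᵢ)·S⁻¹` (row spinor, entries in `Ω`). -/
def theta3 {N : ℕ} (S : Matrix (Fin 2) (Fin 2) ℂ) (i : Fin N) (α : Fin 2) : Om3 N :=
  ![0,
    -(C (Complex.I * S⁻¹ 0 α) * χ i),
    -(C (S⁻¹ 1 α) * ψ i),
    C (Complex.I * S⁻¹ 0 α) * ψ i + C (S⁻¹ 1 α) * χ i,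
    0, 0, 0, 0]

/-- The subring `ℂ[ψ₂, χ₂]` of `R3 2`. -/
def coefRing2 : Subalgebra ℂ (R3 2) :=
  MvPolynomial.supported ℂ ({Sum.inl 1, Sum.inr 1} : Set (Fin 2 ⊕ Fin 2))
/-- Membership in the coefficient ring is preserved by constants. -/
lemma C_mem_coef (c : ℂ) : (C c : R3 2) ∈ coefRing2 := coefRing2.algebraMap_mem c

lemma ψ1_mem : (ψ 1 : R3 2) ∈ coefRing2 := by
  unfold coefRing2 ψ
  exact MvPolynomial.X_mem_supported.2 (by simp)

lemma χ1_mem : (χ 1 : R3 2) ∈ coefRing2 := by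
  unfold coefRing2 χ
  exact MvPolynomial.X_mem_supported.2 (by simp)

/-- Substitution of `p, q` for `ψ₁, χ₁`, keeping `ψ₂, χ₂`. -/
def sub2 (p q : R3 2) : R3 2 →ₐ[ℂ] R3 2 :=
  aeval (Sum.elim ![p, ψ 1] ![q, χ 1])

@[simp] lemma sub2_ψ0 (p q : R3 2) : sub2 p q (ψ 0) = p := by simp [sub2, ψ]
@[simp] lemma sub2_ψ1 (p q : R3 2) : sub2 p q (ψ 1) = ψ 1 := by simp [sub2, ψ]
@[simp] lemma sub2_χ0 (p q : R3 2) : sub2 p q (χ 0) = q := by simp [sub2, χ]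
@[simp] lemma sub2_χ1 (p q : R3 2) : sub2 p q (χ 1) = χ 1 := by simp [sub2, χ]
@[simp] lemma sub2_C (p q : R3 2) (c : ℂ) : sub2 p q (C c) = C c := (sub2 p q).commutes c

lemma sub2_coef (p q : R3 2) {a : R3 2} (ha : a ∈ coefRing2) : sub2 p q a = a := by
  have h : coefRing2 ≤ AlgHom.equalizer (sub2 p q) (AlgHom.id ℂ (R3 2)) := by
    unfold coefRing2 MvPolynomial.supported
    refine Algebra.adjoin_le ?_
    rintro _ ⟨i, hi, rfl⟩
    rcases hi with rfl | rfl
    · exact sub2_ψ1 p q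
    · exact sub2_χ1 p q
  exact h ha

lemma ind4 {M : R3 2 → Prop} (hC : ∀ c, M (C c)) (hadd : ∀ f g, M f → M g → M (f + g))
    (h1 : ∀ f, M f → M (f * ψ 0)) (h2 : ∀ f, M f → M (f * ψ 1))
    (h3 : ∀ f, M f → M (f * χ 0)) (h4 : ∀ f, M f → M (f * χ 1)) (f : R3 2) : M f := by
  refine MvPolynomial.induction_on f hC hadd ?_
  rintro p (i | i) hp
  · fin_cases i
    · exact h1 p hp
    · exact h2 p hp
  · fin_cases i
    · exact h3 p hp
    · exact h4 p hp

lemma sub2_zero_mem (f : R3 2) : sub2 0 0 f ∈ coefRing2 := by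
  revert f
  refine ind4 ?_ ?_ ?_ ?_ ?_ ?_
  · intro c; rw [sub2_C]; exact C_mem_coef c
  · intro f g hf hg; rw [map_add]; exact add_mem hf hg
  · intro f _; simp
  · intro f hf; rw [map_mul, sub2_ψ1]; exact mul_mem hf ψ1_mem
  · intro f _; simp
  · intro f hf; rw [map_mul, sub2_χ1]; exact mul_mem hf χ1_mem

lemma PP2 : PP 2 = ψ 0 ^ 2 + ψ 1 ^ 2 := by simp [PP]
lemma QQ2 : QQ 2 = χ 0 ^ 2 + χ 1 ^ 2 := by simp [QQ]
lemma SS2 : SS 2 = ψ 0 * χ 0 + ψ 1 * χ 1 := by simp [SS]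

lemma II : (C Complex.I : R3 2) * C Complex.I = -1 := by
  rw [← C_mul, Complex.I_mul_I]; simp

lemma ψ_ne (i : Fin 2) : (ψ i : R3 2) ≠ 0 := X_ne_zero _
lemma χ_ne (i : Fin 2) : (χ i : R3 2) ≠ 0 := X_ne_zero _

lemma CI_ne : (C Complex.I : R3 2) ≠ 0 := by
  intro h; have := II; rw [h] at this; simp at this

lemma PP2_ne : PP 2 ≠ 0 := by
  intro h
  have := congrArg (sub2 0 0) h
  simp [PP2, ψ_ne] at this

lemma QQ2_ne : QQ 2 ≠ 0 := by
  intro h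
  have := congrArg (sub2 0 0) h
  simp [QQ2, χ_ne] at this

/-- Division with remainder by `P` and `Q`. -/
lemma divPQ (f : R3 2) : ∃ g h : R3 2, ∃ a ∈ coefRing2, ∃ b ∈ coefRing2, ∃ c ∈ coefRing2,
    ∃ e ∈ coefRing2,
      f = PP 2 * g + QQ 2 * h + (a + b * ψ 0 + c * χ 0 + e * (ψ 0 * χ 0)) := by
  have hu := ψ1_mem
  have hv := χ1_mem
  rw [PP2, QQ2]
  revert f
  refine ind4 ?_ ?_ ?_ ?_ ?_ ?_
  · intro c
    exact ⟨0, 0, C c, C_mem_coef c, 0, zero_mem _, 0, zero_mem _, 0, zero_mem _, by ring⟩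
  · rintro f f' ⟨g, h, a, ha, b, hb, c, hc, e, he, rfl⟩
      ⟨g', h', a', ha', b', hb', c', hc', e', he', rfl⟩
    exact ⟨g + g', h + h', a + a', add_mem ha ha', b + b', add_mem hb hb', c + c',
      add_mem hc hc', e + e', add_mem he he', by ring⟩
  · rintro f ⟨g, h, a, ha, b, hb, c, hc, e, he, rfl⟩
    exact ⟨g * ψ 0 + b + e * χ 0, h * ψ 0, -(b * (ψ 1 * ψ 1)),
      neg_mem (mul_mem hb (mul_mem hu hu)), a, ha,
      -(e * (ψ 1 * ψ 1)), neg_mem (mul_mem he (mul_mem hu hu)), c, hc, by ring⟩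
  · rintro f ⟨g, h, a, ha, b, hb, c, hc, e, he, rfl⟩
    exact ⟨g * ψ 1, h * ψ 1, a * ψ 1, mul_mem ha hu, b * ψ 1, mul_mem hb hu,
      c * ψ 1, mul_mem hc hu, e * ψ 1, mul_mem he hu, by ring⟩
  · rintro f ⟨g, h, a, ha, b, hb, c, hc, e, he, rfl⟩
    exact ⟨g * χ 0, h * χ 0 + c + e * ψ 0, -(c * (χ 1 * χ 1)),
      neg_mem (mul_mem hc (mul_mem hv hv)),
      -(e * (χ 1 * χ 1)), neg_mem (mul_mem he (mul_mem hv hv)), a, ha, b, hb, by ring⟩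
  · rintro f ⟨g, h, a, ha, b, hb, c, hc, e, he, rfl⟩
    exact ⟨g * χ 1, h * χ 1, a * χ 1, mul_mem ha hv, b * χ 1, mul_mem hb hv,
      c * χ 1, mul_mem hc hv, e * χ 1, mul_mem he hv, by ring⟩

lemma two_ne : (2 : R3 2) ≠ 0 := two_ne_zero

/-- Uniqueness of the remainder modulo `(P, Q)`. -/
lemma uniqPQ {a b c e g h : R3 2} (ha : a ∈ coefRing2) (hb : b ∈ coefRing2)
    (hc : c ∈ coefRing2) (he : e ∈ coefRing2)
    (H : a + b * ψ 0 + c * χ 0 + e * (ψ 0 * χ 0) = PP 2 * g + QQ 2 * h) :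
    a = 0 ∧ b = 0 ∧ c = 0 ∧ e = 0 := by
  have key : ∀ p q : R3 2, p ^ 2 + ψ 1 ^ 2 = 0 → q ^ 2 + χ 1 ^ 2 = 0 →
      a + b * p + c * q + e * (p * q) = 0 := by
    intro p q hp hq
    have := congrArg (sub2 p q) H
    simpa [PP2, QQ2, sub2_coef p q ha, sub2_coef p q hb, sub2_coef p q hc,
      sub2_coef p q he, hp, hq] using this
  have hI := II
  set I : R3 2 := C Complex.I with hIdef
  have hP : (I * ψ 1) ^ 2 + ψ 1 ^ 2 = 0 := by linear_combination ψ 1 ^ 2 * hI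
  have hP' : (-(I * ψ 1)) ^ 2 + ψ 1 ^ 2 = 0 := by linear_combination ψ 1 ^ 2 * hI
  have hQ : (I * χ 1) ^ 2 + χ 1 ^ 2 = 0 := by linear_combination χ 1 ^ 2 * hI
  have hQ' : (-(I * χ 1)) ^ 2 + χ 1 ^ 2 = 0 := by linear_combination χ 1 ^ 2 * hI
  have k1 := key _ _ hP hQ
  have k2 := key _ _ hP hQ'
  have k3 := key _ _ hP' hQ
  have k4 := key _ _ hP' hQ'
  have hIne : I ≠ 0 := CI_ne
  have h2 := two_ne
  have hu := ψ_ne 1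
  have hv := χ_ne 1
  refine ⟨?_, ?_, ?_, ?_⟩
  · have : (2 * 2) * a = 0 := by linear_combination k1 + k2 + k3 + k4
    simpa [h2] using this
  · have : (2 * 2) * (I * ψ 1) * b = 0 := by linear_combination k1 + k2 - k3 - k4
    simpa [h2, hIne, hu] using this
  · have : (2 * 2) * (I * χ 1) * c = 0 := by linear_combination k1 - k2 + k3 - k4
    simpa [h2, hIne, hv] using this
  · have : (2 * 2) * (I * ψ 1) * (I * χ 1) * e = 0 := by
      linear_combination k1 - k2 - k3 + k4
    simpa [h2, hIne, hu, hv] using this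

/-- Division with remainder by `P`. -/
lemma divP (f : R3 2) : ∃ g r s : R3 2, (∀ p, sub2 p (χ 0) r = r) ∧ (∀ p, sub2 p (χ 0) s = s) ∧
      f = PP 2 * g + (r + s * ψ 0) := by
  rw [PP2]
  revert f
  refine ind4 ?_ ?_ ?_ ?_ ?_ ?_
  · intro c
    exact ⟨0, C c, 0, by simp, by simp, by ring⟩
  · rintro f f' ⟨g, r, s, hr, hs, rfl⟩ ⟨g', r', s', hr', hs', rfl⟩
    exact ⟨g + g', r + r', s + s', by simp [hr, hr'], by simp [hs, hs'], by ring⟩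
  · rintro f ⟨g, r, s, hr, hs, rfl⟩
    exact ⟨g * ψ 0 + s, -(s * ψ 1 ^ 2), r, by simp [hs], hr, by ring⟩
  · rintro f ⟨g, r, s, hr, hs, rfl⟩
    exact ⟨g * ψ 1, r * ψ 1, s * ψ 1, by simp [hr], by simp [hs], by ring⟩
  · rintro f ⟨g, r, s, hr, hs, rfl⟩
    exact ⟨g * χ 0, r * χ 0, s * χ 0, by simp [hr], by simp [hs], by ring⟩
  · rintro f ⟨g, r, s, hr, hs, rfl⟩
    exact ⟨g * χ 1, r * χ 1, s * χ 1, by simp [hr], by simp [hs], by ring⟩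

/-- `P, Q` is a regular sequence. -/
lemma regPQ {f1 f2 : R3 2} (H : PP 2 * f1 + QQ 2 * f2 = 0) :
    ∃ g, f1 = -(QQ 2 * g) ∧ f2 = PP 2 * g := by
  obtain ⟨g, r, s, hr, hs, hf⟩ := divP f2
  have key : ∀ p : R3 2, p ^ 2 + ψ 1 ^ 2 = 0 → r + s * p = 0 := by
    intro p hp
    have h1 := congrArg (sub2 p (χ 0)) H
    have hq : (χ 0 ^ 2 + χ 1 ^ 2 : R3 2) ≠ 0 := by rw [← QQ2]; exact QQ2_ne
    rw [hf] at h1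
    simpa [PP2, QQ2, hr, hs, hp, hq] using h1
  have hI := II
  have k1 := key (C Complex.I * ψ 1) (by linear_combination ψ 1 ^ 2 * hI)
  have k2 := key (-(C Complex.I * ψ 1)) (by linear_combination ψ 1 ^ 2 * hI)
  have hr0 : r = 0 := by
    have : 2 * r = 0 := by linear_combination k1 + k2
    simpa [two_ne] using this
  have hs0 : s = 0 := by
    have : 2 * (C Complex.I * ψ 1) * s = 0 := by linear_combination k1 - k2
    have hIne := CI_ne
    have hu := ψ_ne 1
    rcases mul_eq_zero.1 this with h | h
    · exact absurd h (mul_ne_zero two_ne (mul_ne_zero hIne hu))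
    · exact h
  subst hr0 hs0
  have hf' : f2 = PP 2 * g := by rw [hf]; ring
  refine ⟨g, ?_, hf'⟩
  apply mul_left_cancel₀ PP2_ne
  rw [hf'] at H
  linear_combination H

/-- Coprimality of `ψ₂` and `χ₂` in the coefficient ring. -/
lemma coprime_uv {b c : R3 2} (hb : b ∈ coefRing2) 
    (H : ψ 1 * b = χ 1 * c) : ∃ k ∈ coefRing2, b = χ 1 * k ∧ c = ψ 1 * k := by
  have hp : Prime (χ 1 : R3 2) := MvPolynomial.X_prime
  have hd : (χ 1 : R3 2) ∣ ψ 1 * b := ⟨c, H⟩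
  rcases hp.dvd_or_dvd hd with h | h
  · exfalso
    unfold χ ψ at h
    rw [MvPolynomial.X_dvd_X] at h
    simp at h
  · obtain ⟨k, hk⟩ := h
    have hb' : b = χ 1 * sub2 0 0 k := by
      have := congrArg (sub2 0 0) hk
      simpa [sub2_coef 0 0 hb] using this
    refine ⟨_, sub2_zero_mem k, hb', ?_⟩
    apply mul_left_cancel₀ (χ_ne 1)
    rw [← H]
    nth_rw 1 [hb']
    ring

/-- Elements of the coefficient-ring span multiplied by `S` modulo `(P, Q)`. -/
lemma annS {f1 f2 a b c e : R3 2} (ha : a ∈ coefRing2) (hb : b ∈ coefRing2)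
    (hc : c ∈ coefRing2) (he : e ∈ coefRing2) {a' b' c' : R3 2}
    (ha' : a' ∈ coefRing2) (hb' : b' ∈ coefRing2) (hc' : c' ∈ coefRing2)
    (H : PP 2 * f1 + QQ 2 * f2 + SS 2 * (a + b * ψ 0 + c * χ 0 + e * (ψ 0 * χ 0))
      = a' + b' * ψ 0 + c' * χ 0) :
    a' = 0 ∧ a = - (ψ 1 * χ 1 * e) ∧ b' = χ 1 * (ψ 1 * b - χ 1 * c) ∧
      c' = -(ψ 1 * (ψ 1 * b - χ 1 * c)) := by
  have hu := ψ1_mem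
  have hv := χ1_mem
  have huv := mul_mem hu hv
  rw [SS2] at H
  obtain ⟨h1, h2, h3, h4⟩ := uniqPQ
    (a := a' - ψ 1 * χ 1 * (a + ψ 1 * χ 1 * e))
    (b := b' - χ 1 * (ψ 1 * b - χ 1 * c))
    (c := c' + ψ 1 * (ψ 1 * b - χ 1 * c))
    (e := -(a + ψ 1 * χ 1 * e))
    (g := f1 + b * χ 0 + e * χ 0 ^ 2)
    (h := f2 + c * ψ 0 - e * ψ 1 ^ 2)
    (sub_mem ha' (mul_mem huv (add_mem ha (mul_mem huv he))))
    (sub_mem hb' (mul_mem hv (sub_mem (mul_mem hu hb) (mul_mem hv hc))))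
    (add_mem hc' (mul_mem hu (sub_mem (mul_mem hu hb) (mul_mem hv hc))))
    (neg_mem (add_mem ha (mul_mem huv he)))
    (by rw [PP2, QQ2] at *; linear_combination -H)
  exact ⟨by linear_combination h1 - ψ 1 * χ 1 * h4, by linear_combination -h4,
    by linear_combination h2, by linear_combination h3⟩

lemma xi_inv (S : Matrix (Fin 2) (Fin 2) ℂ) (hS : IsUnit S.det) (i : Fin 2) :
    ψ i = xi3 S i 0 * C (S 0 0) + xi3 S i 1 * C (S 1 0) ∧
    C Complex.I * χ i = xi3 S i 0 * C (S 0 1) + xi3 S i 1 * C (S 1 1) := by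
  have h := Matrix.nonsing_inv_mul S hS
  have h' : ∀ j k, (C (S⁻¹ j 0) : R3 2) * C (S 0 k) + C (S⁻¹ j 1) * C (S 1 k)
      = C ((1 : Matrix (Fin 2) (Fin 2) ℂ) j k) := by
    intro j k
    rw [← C_mul, ← C_mul, ← C_add, ← h, Matrix.mul_apply, Fin.sum_univ_two]
  have h00 := h' 0 0
  have h01 := h' 0 1
  have h10 := h' 1 0
  have h11 := h' 1 1
  simp only [Matrix.one_apply_eq, ne_eq, zero_ne_one, one_ne_zero, not_false_eq_true,
    Matrix.one_apply_ne, C_0, C_1] at h00 h01 h10 h11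
  unfold xi3
  simp only [C_mul]
  constructor
  · linear_combination -(ψ i) * h00 - C Complex.I * χ i * h10
  · linear_combination -(ψ i) * h01 - C Complex.I * χ i * h11

/-- Any combination of `ψᵢ, χᵢ` is a combination of the components of `ξᵢ`. -/
lemma xi_span (S : Matrix (Fin 2) (Fin 2) ℂ) (hS : IsUnit S.det) (i : Fin 2) {b c : R3 2}
    (hb : b ∈ coefRing2) (hc : c ∈ coefRing2) :
    ∃ d1 ∈ coefRing2, ∃ d2 ∈ coefRing2,
      b * ψ i + c * χ i = xi3 S i 0 * d1 + xi3 S i 1 * d2 := by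
  obtain ⟨h1, h2⟩ := xi_inv S hS i
  refine ⟨C (S 0 0) * b - C Complex.I * C (S 0 1) * c,
    sub_mem (mul_mem (C_mem_coef _) hb) (mul_mem (mul_mem (C_mem_coef _) (C_mem_coef _)) hc),
    C (S 1 0) * b - C Complex.I * C (S 1 1) * c,
    sub_mem (mul_mem (C_mem_coef _) hb) (mul_mem (mul_mem (C_mem_coef _) (C_mem_coef _)) hc),
    ?_⟩
  linear_combination b * h1 - c * C Complex.I * h2 + c * χ i * II

lemma half_I : ∃ h : R3 2, h ∈ coefRing2 ∧ h * (2 * C Complex.I) = 1 := by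
  refine ⟨C ((2 * Complex.I)⁻¹), C_mem_coef _, ?_⟩
  have : (2 : R3 2) = C 2 := (map_ofNat C 2).symm
  rw [this, ← C_mul, ← C_mul, inv_mul_cancel₀ (by simp), C_1]

/-- for `N = 2` and any invertible `S` (equivalent spinor
representation), (i) `dω = 0` iff
`ω ∼ a + Σ_α ξ₁^α a_α + Θ₁₂ b₁ + (Θ₁₁ − Θ₂₂) b₂` with coefficients in `ℂ[ψ₂, χ₂]`;
(ii) such a combination is `∼ 0` iff `a = b₁ = b₂ = 0` and
`Σ_α ξ₁^α a_α = (ξ₁·ξ₂)·(ξ₂¹d₁ + ξ₂²d₂)` for some `d₁, d₂ ∈ ℂ[ψ₂, χ₂]`. -/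
theorem stmt10 (S : Matrix (Fin 2) (Fin 2) ℂ) (hS : IsUnit S.det) :
    (∀ ω : Om3 2, d3 ω = 0 ↔
      ∃ a ∈ coefRing2, ∃ a1 ∈ coefRing2, ∃ a2 ∈ coefRing2,
      ∃ b1 ∈ coefRing2, ∃ b2 ∈ coefRing2,
        Equiv3 ω
          (ofR3 (a + xi3 S 0 0 * a1 + xi3 S 0 1 * a2)
            + b1 • Theta 0 1 + b2 • (Theta 0 0 - Theta 1 1)))
    ∧
    (∀ a a1 a2 b1 b2 : R3 2,
      a ∈ coefRing2 → a1 ∈ coefRing2 → a2 ∈ coefRing2 →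
      b1 ∈ coefRing2 → b2 ∈ coefRing2 →
      (Equiv3
        ((ofR3 (a + xi3 S 0 0 * a1 + xi3 S 0 1 * a2)
          + b1 • Theta 0 1 + b2 • (Theta 0 0 - Theta 1 1) : Om3 2)) 0 ↔
      (a = 0 ∧ b1 = 0 ∧ b2 = 0 ∧
        ∃ d1 ∈ coefRing2, ∃ d2 ∈ coefRing2,
          xi3 S 0 0 * a1 + xi3 S 0 1 * a2
            = xidot 0 1 * (xi3 S 1 0 * d1 + xi3 S 1 1 * d2)))) := by
  have hu := ψ1_mem
  have hv := χ1_mem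
  have hI := II
  constructor
  · intro ω
    constructor
    · intro hω
      have h0 := congrFun hω 0
      have h1 := congrFun hω 1
      have h3 := congrFun hω 3
      have h6 := congrFun hω 6
      simp [d3] at h0 h1 h3 h6
      have w7 : ω 7 = 0 := by
        rcases h6 with h | h
        · exact absurd h PP2_ne
        · exact h
      obtain ⟨g7, w5, w6⟩ := regPQ h3
      have w4 : ω 4 = SS 2 * g7 := by
        apply mul_left_cancel₀ QQ2_ne
        rw [w5] at h1
        linear_combination -h1
      obtain ⟨g1, g2, a, ha, b, hb, c, hc, e, he, w0⟩ := divPQ (ω 0)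
      obtain ⟨g5, g6, a', ha', b', hb', c', hc', e', he', w3⟩ := divPQ (ω 3)
      obtain ⟨-, k1, k2, k3⟩ := annS (f1 := ω 1 + SS 2 * g5) (f2 := ω 2 + SS 2 * g6)
        ha' hb' hc' he' (zero_mem _) (zero_mem _) (zero_mem _)
        (by rw [w3] at h0; linear_combination h0)
      have k4 : ψ 1 * b' = χ 1 * c' := by
        have := mul_eq_zero.1 k2.symm
        rcases this with h | h
        · exact absurd h (χ_ne 1)
        · linear_combination h
      obtain ⟨k, hk, rfl, rfl⟩ := coprime_uv hb' k4
      obtain ⟨hf, hhf, hf1⟩ := half_I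
      obtain ⟨a1, ha1, a2, ha2, hxi⟩ := xi_span S hS 0 hb hc
      have k5 : PP 2 * (ω 1 + SS 2 * g5 + 2 * hf * C Complex.I * (k * χ 0 * χ 1)
            + hf * C Complex.I * e' * (χ 0 ^ 2 - χ 1 ^ 2))
          + QQ 2 * (ω 2 + SS 2 * g6 + 2 * hf * C Complex.I * (k * ψ 0 * ψ 1)
            + hf * C Complex.I * e' * (ψ 0 ^ 2 - ψ 1 ^ 2)) = 0 := by
        rw [w3, k1] at h0
        rw [PP2, QQ2, SS2] at *
        linear_combination h0 + ((ψ 0 * χ 0 + ψ 1 * χ 1) * (k * (ψ 0 * χ 1 + ψ 1 * χ 0)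
          + e' * (ψ 0 * χ 0 - ψ 1 * χ 1))) * hf1
      obtain ⟨g4, m1, m2⟩ := regPQ k5
      refine ⟨a - e * (ψ 1 * χ 1), sub_mem ha (mul_mem he (mul_mem hu hv)), a1, ha1, a2, ha2,
        2 * hf * k, mul_mem (mul_mem (ofNat_mem _ 2) hhf) hk,
        hf * e', mul_mem hhf he', ![0, g1, g2, e, g4, g5, g6, g7], ?_⟩
      funext j
      fin_cases j
      · simp [d3, ofR3, Theta]
        rw [w0, SS2]
        linear_combination hxi
      · simp [d3, ofR3, Theta]
        linear_combination m1
      · simp [d3, ofR3, Theta]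
        linear_combination m2
      · simp [d3, ofR3, Theta]
        rw [w3, k1]
        linear_combination (-(k * (ψ 0 * χ 1 + ψ 1 * χ 0))
          - e' * (ψ 0 * χ 0 - ψ 1 * χ 1)) * hf1
      · simp [d3, ofR3, Theta, w4]
      · simp [d3, ofR3, Theta, w5]
      · simp [d3, ofR3, Theta, w6]
      · simp [d3, ofR3, Theta, w7]
    · rintro ⟨a, ha, a1, ha1, a2, ha2, b1, hb1, b2, hb2, ρ, hρ⟩
      have e1 := congrFun hρ 1
      have e2 := congrFun hρ 2
      have e3 := congrFun hρ 3
      have e4 := congrFun hρ 4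
      have e5 := congrFun hρ 5
      have e6 := congrFun hρ 6
      have e7 := congrFun hρ 7
      simp [d3, ofR3, Theta] at e1 e2 e3 e4 e5 e6 e7
      funext j
      fin_cases j
      · simp [d3]
        rw [PP2, QQ2, SS2] at *
        linear_combination (ψ 0 ^ 2 + ψ 1 ^ 2) * e1 + (χ 0 ^ 2 + χ 1 ^ 2) * e2
          + (ψ 0 * χ 0 + ψ 1 * χ 1) * e3
      · simp [d3, e4, e5]; ring
      · simp [d3, e4, e6]; ring
      · simp [d3, e5, e6]; ring
      · simp [d3, e7]
      · simp [d3, e7]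
      · simp [d3, e7]
      · simp [d3]
  · intro a a1 a2 b1 b2 ha ha1 ha2 hb1 hb2
    constructor
    · rintro ⟨ρ, hρ⟩
      have e0 := congrFun hρ 0
      have e3 := congrFun hρ 3
      simp [d3, ofR3, Theta] at e0 e3
      have hIm := C_mem_coef Complex.I
      have h2m : (2 : R3 2) ∈ coefRing2 := ofNat_mem _ 2
      obtain ⟨-, p2, -, p4⟩ := uniqPQ (g := ρ 5) (h := ρ 6)
        (a := -(2 * C Complex.I * b2 * (ψ 1 * χ 1)))
        (b := C Complex.I * b1 * χ 1) (c := C Complex.I * b1 * ψ 1)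
        (e := 2 * C Complex.I * b2)
        (neg_mem (mul_mem (mul_mem (mul_mem h2m hIm) hb2) (mul_mem hu hv)))
        (mul_mem (mul_mem hIm hb1) hv) (mul_mem (mul_mem hIm hb1) hu)
        (mul_mem (mul_mem h2m hIm) hb2) (by linear_combination e3)
      have hb1' : b1 = 0 := by
        rcases mul_eq_zero.1 p2 with h | h
        · rcases mul_eq_zero.1 h with h | h
          · exact absurd h CI_ne
          · exact h
        · exact absurd h (χ_ne 1)
      have hb2' : b2 = 0 := by
        rcases mul_eq_zero.1 p4 with h | h
        · exact absurd h (mul_ne_zero two_ne CI_ne)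
        · exact h
      obtain ⟨g5, g6, p, hp, q, hq, r, hr, s, hs, w3⟩ := divPQ (ρ 3)
      obtain ⟨q1, -, q3, q4⟩ := annS (f1 := ρ 1 + SS 2 * g5) (f2 := ρ 2 + SS 2 * g6)
        hp hq hr hs ha
        (b' := C (S⁻¹ 0 0) * a1 + C (S⁻¹ 0 1) * a2)
        (c' := C (Complex.I * S⁻¹ 1 0) * a1 + C (Complex.I * S⁻¹ 1 1) * a2)
        (add_mem (mul_mem (C_mem_coef _) ha1) (mul_mem (C_mem_coef _) ha2))
        (add_mem (mul_mem (C_mem_coef _) ha1) (mul_mem (C_mem_coef _) ha2))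
        (by rw [w3] at e0; unfold xi3 at e0; linear_combination -e0)
      obtain ⟨d1, hd1, d2, hd2, hd⟩ := xi_span S hS 1 hq (neg_mem hr)
      refine ⟨q1, hb1', hb2', d1, hd1, d2, hd2, ?_⟩
      rw [← hd]
      unfold xi3 xidot
      linear_combination ψ 0 * q3 + χ 0 * q4
    · rintro ⟨rfl, rfl, rfl, d1, hd1, d2, hd2, H⟩
      have hx : ∃ q r : R3 2, xi3 S 1 0 * d1 + xi3 S 1 1 * d2 = q * ψ 1 + r * χ 1 :=
        ⟨C (S⁻¹ 0 0) * d1 + C (S⁻¹ 0 1) * d2,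
          C (Complex.I * S⁻¹ 1 0) * d1 + C (Complex.I * S⁻¹ 1 1) * d2, by unfold xi3; ring⟩
      obtain ⟨q, r, hx⟩ := hx
      rw [hx] at H
      refine ⟨![0, -(q * χ 0), r * ψ 0, q * ψ 0 - r * χ 0, 0, 0, 0, 0], ?_⟩
      funext j
      fin_cases j
      · simp [d3, ofR3, Theta]
        rw [H, PP2, QQ2, SS2]
        unfold xidot
        ring
      all_goals simp [d3, ofR3, Theta]
end
end
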